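/- arXiv:2002.11961 — 2 statements merged into one kernel-verified Lean document; each statement's English description precedes it below -/
import Mathlib

section
/- Let X be a reflexive real Banach space. Then every nonempty closed convex subset of X is simultaneously approximatively weakly compact. -/
/-!
A minimizing sequence for a nonempty bounded set is bounded. In a reflexive space, bounded sets are
relatively weakly compact by Banach–Alaoglu. Weakly compact sets are weakly sequentially compact
(the easy half of the Eberlein–Šmulian theorem): a sequence stays in its closed linear span, which
is weakly closed and separable, and on a separable subspace countably many functionals separate
points, so that the weak topology of compact sets there is metrizable. Hence the sequence has a
weakly convergent subsequence, and its limit stays in `C` because closed convex sets are weakly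
closed.
-/

open Filter Topology Pointwise

variable {X : Type*} [NormedAddCommGroup X] [NormedSpace ℝ X]

/-- `simSup A y = sup_{a ∈ A} ‖a - y‖`. -/
noncomputable def simSup (A : Set X) (y : X) : ℝ := ⨆ a : A, ‖(a : X) - y‖

/-- `simDist A C = inf_{y ∈ C} sup_{a ∈ A} ‖a - y‖`. -/
noncomputable def simDist (A C : Set X) : ℝ := ⨅ y : C, simSup A (y : X)

/-- The set of best simultaneous approximations `P_C(A)`. -/
def simBest (A C : Set X) : Set X := {y | y ∈ C ∧ simSup A y = simDist A C}

/-- The set `P_C(A, δ)`. -/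
def simBestApprox (A C : Set X) (δ : ℝ) : Set X :=
  {y | y ∈ C ∧ simSup A y < simDist A C + δ}

/-- `C` is simultaneously proximinal. -/
def SimProximinal (C : Set X) : Prop :=
  ∀ A : Set X, A.Nonempty → Bornology.IsBounded A → (simBest A C).Nonempty

/-- `y` is a minimizing sequence in `C` for `A`. -/
def IsMinimizing (A C : Set X) (y : ℕ → X) : Prop :=
  (∀ n, y n ∈ C) ∧ Tendsto (fun n => simSup A (y n)) atTop (𝓝 (simDist A C))

/-- Weak convergence of a sequence. -/
def WeakTendsto (y : ℕ → X) (c : X) : Prop :=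
  ∀ f : X →L[ℝ] ℝ, Tendsto (fun n => f (y n)) atTop (𝓝 (f c))

/-- `C` is simultaneously approximatively compact. -/
def SimApproxCompact (C : Set X) : Prop :=
  ∀ A : Set X, A.Nonempty → Bornology.IsBounded A → ∀ y : ℕ → X, IsMinimizing A C y →
    ∃ c ∈ C, ∃ φ : ℕ → ℕ, StrictMono φ ∧ Tendsto (y ∘ φ) atTop (𝓝 c)

/-- `C` is simultaneously approximatively weakly compact. -/
def SimApproxWeakCompact (C : Set X) : Prop :=
  ∀ A : Set X, A.Nonempty → Bornology.IsBounded A → ∀ y : ℕ → X, IsMinimizing A C y →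
    ∃ c ∈ C, ∃ φ : ℕ → ℕ, StrictMono φ ∧ WeakTendsto (y ∘ φ) c

/-- `C` is simultaneously strongly proximinal. -/
def SimStronglyProximinal (C : Set X) : Prop :=
  SimProximinal C ∧ ∀ A : Set X, A.Nonempty → Bornology.IsBounded A → ∀ ε > (0 : ℝ),
    ∃ δ > (0 : ℝ), simBestApprox A C δ ⊆ simBest A C + Metric.closedBall (0 : X) ε

/-- `C` is simultaneously weakly strongly proximinal. -/
def SimWeakStronglyProximinal (C : Set X) : Prop :=
  SimProximinal C ∧ ∀ A : Set X, A.Nonempty → Bornology.IsBounded A →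
    ∀ V : Set X, V ∈ 𝓝 (0 : WeakSpace ℝ X) → ∃ δ > (0 : ℝ),
      simBestApprox A C δ ⊆ simBest A C + V

lemma continuous_dual_toWeakSpace_symm {𝕜 E : Type*} [CommSemiring 𝕜] [TopologicalSpace 𝕜]
    [ContinuousAdd 𝕜] [ContinuousConstSMul 𝕜 𝕜] [AddCommMonoid E] [Module 𝕜 E]
    [TopologicalSpace E] (f : StrongDual 𝕜 E) :
    Continuous fun x : WeakSpace 𝕜 E => f ((toWeakSpace 𝕜 E).symm x) :=
  WeakBilin.eval_continuous _ f

lemma isClosed_toWeakSpace_image_of_convex (𝕜 : Type*) {E : Type*} [RCLike 𝕜] [AddCommGroup E]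
    [Module 𝕜 E] [Module ℝ E] [IsScalarTower ℝ 𝕜 E] [TopologicalSpace E]
    [IsTopologicalAddGroup E] [ContinuousSMul 𝕜 E] [LocallyConvexSpace ℝ E] {C : Set E}
    (hclosed : IsClosed C) (hconv : Convex ℝ C) : IsClosed (toWeakSpace 𝕜 E '' C) := by
  rw [← hclosed.closure_eq, hconv.toWeakSpace_closure 𝕜]
  exact isClosed_closure

section WeakTopology

variable {𝕜 E : Type*} [RCLike 𝕜] [NormedAddCommGroup E] [NormedSpace 𝕜 E]

variable (𝕜) in
lemma exists_seq_dual_separating_of_isSeparable {S : Set E}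
    (hS : TopologicalSpace.IsSeparable S) :
    ∃ f : ℕ → StrongDual 𝕜 E, ∀ x ∈ S, (∀ n, f n x = 0) → x = 0 := by
  obtain rfl | hne := S.eq_empty_or_nonempty
  · exact ⟨0, by simp⟩
  have := hS.separableSpace
  have := hne.to_subtype
  let d : ℕ → S := TopologicalSpace.denseSeq S
  -- Norming functionals of a dense sequence already separate points.
  choose f hf_norm hf_eq using fun n => exists_dual_vector'' 𝕜 (d n : E)
  refine ⟨f, fun x hx hfx => norm_le_zero_iff.1 (le_of_forall_pos_le_add fun ε hε => ?_)⟩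
  obtain ⟨n, hn⟩ : ∃ n, dist (⟨x, hx⟩ : S) (d n) < ε / 2 :=
    (TopologicalSpace.denseRange_denseSeq S).exists_dist_lt _ (half_pos hε)
  have hxd : ‖x - d n‖ < ε / 2 := by rwa [Subtype.dist_eq, dist_eq_norm] at hn
  have hd : ‖(d n : E)‖ ≤ ‖x - d n‖ := calc
    ‖(d n : E)‖ = ‖f n (x - d n)‖ := by simp [hfx n, hf_eq n]
    _ ≤ 1 * ‖x - d n‖ := (f n).le_of_opNorm_le (hf_norm n) _
    _ = ‖x - d n‖ := one_mul _
  calc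
    ‖x‖ ≤ ‖x - d n‖ + ‖(d n : E)‖ := norm_le_norm_sub_add x (d n : E)
    _ ≤ 0 + ε := by linarith

lemma metrizableSpace_of_isCompact_of_isSeparable {K : Set (WeakSpace 𝕜 E)} (hK : IsCompact K)
    (hsep : TopologicalSpace.IsSeparable (toWeakSpace 𝕜 E ⁻¹' K)) :
    TopologicalSpace.MetrizableSpace K := by
  have := isCompact_iff_compactSpace.1 hK
  obtain ⟨f, hf⟩ := exists_seq_dual_separating_of_isSeparable 𝕜 (hsep.span (R := 𝕜))
  refine Metric.PiNatEmbed.TopologicalSpace.MetrizableSpace.of_countable_separating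
    (fun n (x : K) => f n ((toWeakSpace 𝕜 E).symm x))
    (fun n => (continuous_dual_toWeakSpace_symm (f n)).comp continuous_subtype_val)
    fun x y hxy => ?_
  by_contra! hfxy
  have hmem : (toWeakSpace 𝕜 E).symm x - (toWeakSpace 𝕜 E).symm y ∈
      Submodule.span 𝕜 (toWeakSpace 𝕜 E ⁻¹' K) :=
    sub_mem (Submodule.subset_span (by simp)) (Submodule.subset_span (by simp))
  have hzero := hf _ hmem fun n => by rw [map_sub, hfxy n, sub_self]
  exact hxy (Subtype.ext ((toWeakSpace 𝕜 E).symm.injective (sub_eq_zero.1 hzero)))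

lemma isClosed_toWeakSpace_image_submodule {M : Submodule 𝕜 E} (hM : IsClosed (M : Set E)) :
    IsClosed (toWeakSpace 𝕜 E '' M) := by
  let _ : NormedSpace ℝ E := NormedSpace.restrictScalars ℝ 𝕜 E
  have : IsScalarTower ℝ 𝕜 E := RestrictScalars.isScalarTower ℝ 𝕜 E
  exact isClosed_toWeakSpace_image_of_convex 𝕜 hM (M.restrictScalars ℝ).convex

theorem isSeqCompact_of_isCompact_weakSpace {K : Set (WeakSpace 𝕜 E)} (hK : IsCompact K) :
    IsSeqCompact K := by
  intro u hu
  let M : Submodule 𝕜 E :=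
    (Submodule.span 𝕜 (Set.range fun n => (toWeakSpace 𝕜 E).symm (u n))).topologicalClosure
  have hMclosed : IsClosed (toWeakSpace 𝕜 E '' M) :=
    isClosed_toWeakSpace_image_submodule (Submodule.isClosed_topologicalClosure _)
  have hMsep : TopologicalSpace.IsSeparable (M : Set E) :=
    (Set.countable_range _).isSeparable.span.closure
  let L : Set (WeakSpace 𝕜 E) := K ∩ toWeakSpace 𝕜 E '' M
  have hLcompact : IsCompact L := hK.inter_right hMclosed
  have := isCompact_iff_compactSpace.1 hLcompact
  have : TopologicalSpace.MetrizableSpace L :=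
    metrizableSpace_of_isCompact_of_isSeparable hLcompact <| hMsep.mono fun x hx => by
      simpa using hx.2
  have huL (n : ℕ) : u n ∈ L :=
    ⟨hu n, _, Submodule.le_topologicalClosure _ (Submodule.subset_span ⟨n, rfl⟩), by simp⟩
  obtain ⟨c, φ, hφ, hlim⟩ := CompactSpace.tendsto_subseq fun n => (⟨u n, huL n⟩ : L)
  exact ⟨c, c.2.1, φ, hφ, (continuous_subtype_val.tendsto c).comp hlim⟩

lemma isCompact_closure_of_isBounded_of_reflexive
    (hrefl : Function.Surjective (NormedSpace.inclusionInDoubleDual 𝕜 E))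
    {S : Set (WeakSpace 𝕜 E)} (hS : Bornology.IsBounded (toWeakSpace 𝕜 E ⁻¹' S)) :
    IsCompact (closure S) := by
  refine NormedSpace.isCompact_closure_of_isBounded 𝕜 E S hS fun φ _ => ?_
  obtain ⟨x, hx⟩ := hrefl (WeakDual.toStrongDual φ)
  exact ⟨toWeakSpace 𝕜 E x, hx⟩

theorem exists_tendsto_toWeakSpace_subseq_of_reflexive
    (hrefl : Function.Surjective (NormedSpace.inclusionInDoubleDual 𝕜 E)) {y : ℕ → E}
    (hy : Bornology.IsBounded (Set.range y)) :
    ∃ (c : E) (φ : ℕ → ℕ), StrictMono φ ∧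
      Tendsto (fun n => toWeakSpace 𝕜 E (y (φ n))) atTop (𝓝 (toWeakSpace 𝕜 E c)) := by
  have hcompact : IsCompact (closure (toWeakSpace 𝕜 E '' Set.range y)) :=
    isCompact_closure_of_isBounded_of_reflexive hrefl <| by
      rwa [Set.preimage_image_eq _ (toWeakSpace 𝕜 E).injective]
  obtain ⟨c, -, φ, hφ, hlim⟩ := isSeqCompact_of_isCompact_weakSpace hcompact
    fun n => subset_closure (Set.mem_image_of_mem (toWeakSpace 𝕜 E) (Set.mem_range_self (f := y) n))
  exact ⟨(toWeakSpace 𝕜 E).symm c, φ, hφ, hlim⟩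

end WeakTopology

lemma WeakTendsto.of_tendsto_toWeakSpace {y : ℕ → X} {c : X}
    (h : Tendsto (fun n => toWeakSpace ℝ X (y n)) atTop (𝓝 (toWeakSpace ℝ X c))) :
    WeakTendsto y c :=
  fun f => ((continuous_dual_toWeakSpace_symm f).tendsto _).comp h

lemma norm_sub_le_simSup {E : Type*} [NormedAddCommGroup E] {A : Set E}
    (hA : Bornology.IsBounded A) {a : E} (ha : a ∈ A) (y : E) : ‖a - y‖ ≤ simSup A y := by
  obtain ⟨R, hR⟩ := hA.subset_closedBall y
  refine le_ciSup (f := fun b : A => ‖(b : E) - y‖) ⟨R, ?_⟩ ⟨a, ha⟩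
  rintro _ ⟨b, rfl⟩
  exact mem_closedBall_iff_norm.1 (hR b.2)

lemma IsMinimizing.isBounded_range {E : Type*} [NormedAddCommGroup E] {A C : Set E}
    {y : ℕ → E} (hy : IsMinimizing A C y) (hne : A.Nonempty) (hA : Bornology.IsBounded A) :
    Bornology.IsBounded (Set.range y) := by
  obtain ⟨a, ha⟩ := hne
  obtain ⟨M, hM⟩ := hy.2.bddAbove_range
  refine (Metric.isBounded_closedBall (x := a) (r := M)).subset ?_
  rintro _ ⟨n, rfl⟩
  rw [mem_closedBall_iff_norm']
  exact (norm_sub_le_simSup hA ha (y n)).trans (hM ⟨n, rfl⟩)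

/-- In a reflexive Banach space every nonempty closed convex subset is simultaneously
approximatively weakly compact. -/
theorem reflexive_closed_convex_simApproxWeakCompact [CompleteSpace X]
    (hrefl : Function.Surjective (NormedSpace.inclusionInDoubleDual ℝ X)) :
    ∀ C : Set X, C.Nonempty → IsClosed C → Convex ℝ C → SimApproxWeakCompact C := by
  intro C _ hclosed hconv A hAne hA y hy
  obtain ⟨c, φ, hφ, hlim⟩ :=
    exists_tendsto_toWeakSpace_subseq_of_reflexive hrefl (hy.isBounded_range hAne hA)
  have hmem : toWeakSpace ℝ X c ∈ toWeakSpace ℝ X '' C :=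
    (isClosed_toWeakSpace_image_of_convex ℝ hclosed hconv).mem_of_tendsto hlim <|
      .of_forall fun n => Set.mem_image_of_mem _ (hy.1 (φ n))
  exact ⟨c, (toWeakSpace ℝ X).injective.mem_set_image.1 hmem, φ, hφ,
    .of_tendsto_toWeakSpace hlim⟩
end

section
/- Let X be a real Banach space. Then X is reflexive if and only if every nonempty closed convex subset of X is simultaneously proximinal. -/
/-!
In a reflexive space, `simSup A` is convex and lower semicontinuous with bounded sublevel sets, and
bounded closed convex sets are weakly compact, so it attains its minimum on `C`.

Conversely, taking `A = {0}`, a nonreflexive Banach space must be shown to contain a nonempty closed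
convex set without an element of minimal norm. James's theorem is not needed, since the set may be
chosen freely. By the Bishop–Phelps theorem in the dual, norm-attaining elements are dense in the
bidual, so there are `F` outside the closed subspace `X` of the bidual and a functional `f` with
`‖F‖ ≤ 1`, `‖f‖ ≤ 1` and `F f = 1`. Let `Φ` vanish on `X` with `Φ F = 1`, and let `t n` decrease
to `0`. Helly's theorem, applied alternately to `Φ` and to `(1 + t n) • F`, gives bounded
functionals `g i` and vectors `w n` with `‖w n‖ < 1 + 2 * t n`, `f (w n) = 1 + t n`, and
`g i (w n) = 1 + t n` if `i ≤ n` but `g i (w n) = 0` if `n < i`. All `w n` belong to the closed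
convex set of those `y` with `g i y → 0`, `1 ≤ f y` and `1 ≤ g i y + (f y - 1) / t i` for all `i`,
and their norms tend to `1`. An element `y` of this set of norm at most `1` would satisfy `f y = 1`,
hence `1 ≤ g i y` for all `i`, contradicting `g i y → 0`.
-/

open Filter Topology Pointwise

variable {X : Type*} [NormedAddCommGroup X] [NormedSpace ℝ X]

section Reflexive

variable {E : Type*} [NormedAddCommGroup E] [NormedSpace ℝ E] {C : Set E} {φ : E → ℝ}

lemma isClosed_toWeakSpace_image (hc : IsClosed C) (hconv : Convex ℝ C) :
    IsClosed (toWeakSpace ℝ E '' C) := by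
  have h := hconv.toWeakSpace_closure ℝ
  rw [hc.closure_eq] at h
  exact h ▸ isClosed_closure

lemma isCompact_toWeakSpace_image
    (hE : Function.Surjective (NormedSpace.inclusionInDoubleDual ℝ E))
    (hc : IsClosed C) (hconv : Convex ℝ C) (hb : Bornology.IsBounded C) :
    IsCompact (toWeakSpace ℝ E '' C) := by
  rw [← (isClosed_toWeakSpace_image hc hconv).closure_eq]
  refine NormedSpace.isCompact_closure_of_isBounded ℝ E _ ?_ fun G _ => ?_
  · rwa [Set.preimage_image_eq _ (toWeakSpace ℝ E).injective]
  · obtain ⟨x, hx⟩ := hE (WeakDual.toStrongDual G)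
    exact ⟨toWeakSpace ℝ E x, hx⟩

lemma exists_isMinOn_of_quasiconvexOn
    (hE : Function.Surjective (NormedSpace.inclusionInDoubleDual ℝ E))
    (hc : IsClosed C) (hφ : LowerSemicontinuous φ) (hq : QuasiconvexOn ℝ C φ) {x₀ : E}
    (hx₀ : x₀ ∈ C) (hb : Bornology.IsBounded {x ∈ C | φ x ≤ φ x₀}) :
    ∃ x ∈ C, IsMinOn φ C x := by
  let S (r : ℝ) : Set E := {x ∈ C | φ x ≤ r}
  have hS (r : ℝ) : IsClosed (S r) := hc.inter (hφ.isClosed_preimage r)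
  have hlsc : LowerSemicontinuousOn (φ ∘ (toWeakSpace ℝ E).symm)
      (toWeakSpace ℝ E '' S (φ x₀)) := by
    refine lowerSemicontinuousOn_iff_preimage_Iic.2 fun r =>
      ⟨_, isClosed_toWeakSpace_image (hS r) (hq r), ?_⟩
    ext w
    obtain ⟨x, rfl⟩ := (toWeakSpace ℝ E).surjective w
    simp +contextual [S]
  have hne : (S (φ x₀)).Nonempty := ⟨x₀, hx₀, le_rfl⟩
  obtain ⟨_, ⟨x, hx, rfl⟩, hmin⟩ := hlsc.exists_isMinOn (hne.image _)
    (isCompact_toWeakSpace_image hE (hS _) (hq _) hb)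
  refine ⟨x, hx.1, fun y hy => ?_⟩
  rcases le_total (φ y) (φ x₀) with hy₀ | hy₀
  · simpa using hmin ⟨y, ⟨hy, hy₀⟩, rfl⟩
  · exact hx.2.trans hy₀

end Reflexive

section SimultaneousApproximation

variable {E : Type*} [NormedAddCommGroup E] {A C : Set E}

lemma bddAbove_range_norm_sub (hA : Bornology.IsBounded A) (y : E) :
    BddAbove (Set.range fun a : A => ‖(a : E) - y‖) := by
  obtain ⟨R, hR⟩ := hA.exists_norm_le
  refine ⟨R + ‖y‖, Set.forall_mem_range.2 fun a => ?_⟩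
  exact (norm_sub_le _ _).trans (by gcongr; exact hR a a.2)

lemma simSup_nonneg (A : Set E) (y : E) : 0 ≤ simSup A y :=
  Real.iSup_nonneg fun _ => norm_nonneg _

lemma simSup_le_iff (hne : A.Nonempty) (hA : Bornology.IsBounded A) {y : E} {r : ℝ} :
    simSup A y ≤ r ↔ ∀ a ∈ A, y ∈ Metric.closedBall a r := by
  have : Nonempty A := hne.to_subtype
  rw [simSup, ciSup_le_iff (bddAbove_range_norm_sub hA y)]
  simp only [Subtype.forall, mem_closedBall_iff_norm']

lemma setOf_simSup_le (hne : A.Nonempty) (hA : Bornology.IsBounded A) (r : ℝ) :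
    {y | simSup A y ≤ r} = ⋂ a ∈ A, Metric.closedBall a r := by
  ext y
  simp only [Set.mem_ofPred_eq, simSup_le_iff hne hA, Set.mem_iInter]

lemma lowerSemicontinuous_simSup (hne : A.Nonempty) (hA : Bornology.IsBounded A) :
    LowerSemicontinuous (simSup A) := by
  refine lowerSemicontinuous_iff_isClosed_preimage.2 fun r => ?_
  change IsClosed {y | simSup A y ≤ r}
  rw [setOf_simSup_le hne hA]
  exact isClosed_biInter fun a _ => Metric.isClosed_closedBall

lemma isBounded_setOf_simSup_le (hne : A.Nonempty) (hA : Bornology.IsBounded A) (r : ℝ) :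
    Bornology.IsBounded {y | simSup A y ≤ r} := by
  obtain ⟨a, ha⟩ := hne
  exact Metric.isBounded_closedBall.subset fun y hy => (simSup_le_iff ⟨a, ha⟩ hA).1 hy a ha

lemma mem_simBest_iff {y : E} : y ∈ simBest A C ↔ y ∈ C ∧ IsMinOn (simSup A) C y := by
  refine and_congr_right fun hy => ⟨fun h z hz => ?_, fun h => (h.iInf_eq hy).symm⟩
  have hbdd : BddBelow (Set.range fun z : C => simSup A (z : E)) :=
    ⟨0, Set.forall_mem_range.2 fun z => simSup_nonneg A z⟩
  exact h.trans_le (ciInf_le hbdd ⟨z, hz⟩)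

lemma simSup_singleton (a y : E) : simSup {a} y = ‖a - y‖ :=
  ciSup_unique

lemma SimProximinal.exists_isMinOn_norm (hC : SimProximinal C) : ∃ y ∈ C, IsMinOn (‖·‖) C y := by
  obtain ⟨y, hy⟩ := hC {0} (Set.singleton_nonempty 0) Bornology.isBounded_singleton
  have h0 : simSup {(0 : E)} = (‖·‖) := funext fun y => by rw [simSup_singleton, zero_sub, norm_neg]
  exact ⟨y, by rwa [mem_simBest_iff, h0] at hy⟩

variable [NormedSpace ℝ E]

lemma quasiconvexOn_simSup (hne : A.Nonempty) (hA : Bornology.IsBounded A) (hC : Convex ℝ C) :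
    QuasiconvexOn ℝ C (simSup A) := fun r => by
  refine hC.inter (t := {y | simSup A y ≤ r}) ?_
  rw [setOf_simSup_le hne hA]
  exact convex_iInter₂ fun a _ => convex_closedBall a r

lemma simProximinal_of_surjective_inclusionInDoubleDual
    (hE : Function.Surjective (NormedSpace.inclusionInDoubleDual ℝ E))
    (hne : C.Nonempty) (hc : IsClosed C) (hconv : Convex ℝ C) : SimProximinal C := by
  intro A hAne hA
  obtain ⟨x₀, hx₀⟩ := hne
  obtain ⟨y, hy⟩ := exists_isMinOn_of_quasiconvexOn hE hc (lowerSemicontinuous_simSup hAne hA)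
    (quasiconvexOn_simSup hAne hA hconv) hx₀
    ((isBounded_setOf_simSup_le hAne hA _).subset fun _ hx => hx.2)
  exact ⟨y, mem_simBest_iff.2 hy⟩

end SimultaneousApproximation

section Ekeland

variable {M : Type*} [PseudoMetricSpace M] {φ : M → ℝ} {ε : ℝ}

/-- The set of points preferred to `x` in Ekeland's order: moving from `x` to such a point lowers
`φ` at rate at least `ε`. -/
def ekelandSet (φ : M → ℝ) (ε : ℝ) (x : M) : Set M := {y | φ y + ε * dist x y ≤ φ x}

lemma mem_ekelandSet_self (x : M) : x ∈ ekelandSet φ ε x := by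
  simp [ekelandSet]

lemma ekelandSet_subset (hε : 0 ≤ ε) {x y : M} (hy : y ∈ ekelandSet φ ε x) :
    ekelandSet φ ε y ⊆ ekelandSet φ ε x := fun z hz => by
  have htri := mul_le_mul_of_nonneg_left (dist_triangle x y z) hε
  simp only [ekelandSet, Set.mem_ofPred_eq] at hy hz ⊢
  linarith

lemma isClosed_ekelandSet (hφ : LowerSemicontinuous φ) (x : M) : IsClosed (ekelandSet φ ε x) := by
  refine (hφ.add (Continuous.lowerSemicontinuous ?_)).isClosed_preimage (φ x)
  fun_prop

lemma exists_mem_ekelandSet_subset_closedBall (hε : 0 < ε) (hbdd : BddBelow (Set.range φ)) (x : M)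
    {δ : ℝ} (hδ : 0 < δ) :
    ∃ y ∈ ekelandSet φ ε x, ekelandSet φ ε y ⊆ Metric.closedBall y δ := by
  have : Nonempty (ekelandSet φ ε x) := ⟨x, mem_ekelandSet_self x⟩
  have hb : BddBelow (Set.range fun z : ekelandSet φ ε x => φ z) :=
    hbdd.mono (Set.range_comp_subset_range _ φ)
  obtain ⟨⟨y, hy⟩, hlt⟩ := exists_lt_of_ciInf_lt
    (lt_add_of_pos_right (⨅ z : ekelandSet φ ε x, φ z) (mul_pos hε hδ))
  refine ⟨y, hy, fun z hz => ?_⟩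
  have hz' : ⨅ z : ekelandSet φ ε x, φ z ≤ φ z := ciInf_le hb ⟨z, ekelandSet_subset hε.le hy hz⟩
  rw [Metric.mem_closedBall, dist_comm]
  refine le_of_mul_le_mul_left ?_ hε
  simp only [ekelandSet, Set.mem_ofPred_eq] at hz
  linarith

/-- **Ekeland's variational principle**. -/
theorem exists_forall_lt_add_mul_dist {M : Type*} [MetricSpace M] [CompleteSpace M] [Nonempty M]
    {φ : M → ℝ} (hφ : LowerSemicontinuous φ) (hbdd : BddBelow (Set.range φ)) (hε : 0 < ε) :
    ∃ x, ∀ y, y ≠ x → φ x < φ y + ε * dist x y := by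
  have hδ (n : ℕ) : (0 : ℝ) < 1 / (n + 1) := Nat.one_div_pos_of_nat
  choose next hnext hball using fun (n : ℕ) (x : M) =>
    exists_mem_ekelandSet_subset_closedBall hε hbdd x (hδ n)
  let a : ℕ → M := fun n => Nat.rec (Classical.arbitrary M) next n
  let S : ℕ → Set M := fun n => ekelandSet φ ε (a n)
  have hanti : Antitone S := antitone_nat_of_succ_le fun n => ekelandSet_subset hε.le (hnext n _)
  have hdist {n m : ℕ} (hm : n ≤ m) {y : M} (hy : y ∈ S (m + 1)) :
      dist y (a (n + 1)) ≤ 1 / (n + 1) :=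
    hball n (a n) (hanti (Nat.succ_le_succ hm) hy)
  have hlim : Tendsto (fun n : ℕ => 1 / ((n : ℝ) + 1)) atTop (𝓝 0) :=
    tendsto_one_div_add_atTop_nhds_zero_nat
  have hcauchy : CauchySeq fun n => a (n + 1) := by
    refine cauchySeq_of_le_tendsto_0 (fun n => 1 / ((n : ℝ) + 1) + 1 / (n + 1))
      (fun n m N hn hm => (dist_triangle_right _ _ (a (N + 1))).trans ?_) ?_
    · exact add_le_add (hdist hn (mem_ekelandSet_self _)) (hdist hm (mem_ekelandSet_self _))
    · simpa using hlim.add hlim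
  obtain ⟨x, hx⟩ := cauchySeq_tendsto_of_complete hcauchy
  have hxS (n : ℕ) : x ∈ S (n + 1) :=
    (isClosed_ekelandSet hφ _).mem_of_tendsto hx <| (eventually_ge_atTop n).mono fun m hm =>
      hanti (Nat.succ_le_succ hm) (mem_ekelandSet_self _)
  refine ⟨x, fun y hyx => not_le.1 fun hy => hyx ?_⟩
  have hya : Tendsto (fun n => a (n + 1)) atTop (𝓝 y) :=
    tendsto_iff_dist_tendsto_zero.2 <| squeeze_zero (fun _ => dist_nonneg)
      (fun n => (dist_comm _ _).trans_le (hdist le_rfl (ekelandSet_subset hε.le (hxS n) hy))) hlim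
  exact tendsto_nhds_unique hya hx

end Ekeland

section BishopPhelps

variable {E : Type*} [NormedAddCommGroup E] [NormedSpace ℝ E]

/-- A functional attains its norm if its supremum over the closed unit ball is a maximum. -/
def AttainsNorm (G : StrongDual ℝ E) : Prop := ∃ x, ‖x‖ ≤ 1 ∧ G x = ‖G‖

lemma opNorm_le_of_forall_apply_le {G : StrongDual ℝ E} {c : ℝ} (h : ∀ x, ‖x‖ ≤ 1 → G x ≤ c) :
    ‖G‖ ≤ c := by
  have hc : 0 ≤ c := by simpa using h 0 (by simp)
  refine G.opNorm_le_of_unit_norm hc fun x hx => abs_le.2 ⟨?_, h x hx.le⟩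
  have := h (-x) (by simpa using hx.le)
  rw [map_neg] at this
  linarith

lemma attainsNorm_of_isMaxOn {G : StrongDual ℝ E} {f : E} (hf : ‖f‖ ≤ 1)
    (h : IsMaxOn G (Metric.closedBall 0 1) f) : AttainsNorm G :=
  ⟨f, hf, le_antisymm ((le_abs_self _).trans (G.unit_le_opNorm f hf))
    (opNorm_le_of_forall_apply_le fun _ hx => h (mem_closedBall_zero_iff.2 hx))⟩

lemma AttainsNorm.smul {G : StrongDual ℝ E} (hG : AttainsNorm G) {c : ℝ} (hc : 0 ≤ c) :
    AttainsNorm (c • G) := by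
  obtain ⟨x, hx, hGx⟩ := hG
  exact ⟨x, hx, by simp [norm_smul, abs_of_nonneg hc, hGx]⟩

-- The cone `{v | ε * ‖v‖ < F v}` sits inside a half-space bounded by `ker L`, so `F` is at most
-- `ε` in norm on `ker L`; a norm-preserving extension of `F|ker L` differs from `F` by a multiple
-- of `L`.
lemma exists_norm_sub_smul_le {F L : StrongDual ℝ E} {ε : ℝ} (hε : 0 ≤ ε)
    (h : ∀ v, ε * ‖v‖ < F v → 0 < L v) : ∃ c : ℝ, 0 ≤ c ∧ ‖F - c • L‖ ≤ ε := by
  by_cases hF : ‖F‖ ≤ ε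
  · exact ⟨0, le_rfl, by simpa using hF⟩
  obtain ⟨v, hv⟩ : ∃ v, ε * ‖v‖ < F v := by
    by_contra! hle
    exact hF (opNorm_le_of_forall_apply_le fun x hx =>
      (hle x).trans (mul_le_of_le_one_right hε hx))
  have hker (x : E) (hx : L x = 0) : F x ≤ ε * ‖x‖ := not_lt.1 fun hlt => (h x hlt).ne' hx
  let p := LinearMap.ker L.toLinearMap
  obtain ⟨H, hH, hHnorm⟩ := exists_extension_norm_eq p (F.comp p.subtypeL)
  have hHε : ‖H‖ ≤ ε := hHnorm.trans_le <| opNorm_le_of_forall_apply_le fun x hx =>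
    (hker x x.2).trans (mul_le_of_le_one_right hε hx)
  obtain ⟨c, hc⟩ : ∃ c : ℝ, c • L = F - H := by
    have hspan : (F - H).toLinearMap ∈ Submodule.span ℝ (Set.range fun _ : Unit => L.toLinearMap) :=
      mem_span_of_iInf_ker_le_ker fun x hx => by
        have hx' : L x = 0 := by simpa using hx
        simpa [sub_eq_zero] using (hH ⟨x, hx'⟩).symm
    rw [Set.range_const, Submodule.mem_span_singleton] at hspan
    exact hspan.imp fun c hc => ContinuousLinearMap.coe_injective hc
  have hcv : c * L v = F v - H v := congr($hc v)
  have hHv : H v ≤ ε * ‖v‖ := (le_abs_self _).trans (H.le_of_opNorm_le hHε v)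
  refine ⟨c, (pos_of_mul_pos_left (hcv ▸ by linarith) (h v hv).le).le, ?_⟩
  rwa [hc, sub_sub_cancel]

lemma exists_forall_lt_forall_le_of_mem_closure {s t : Set E} (hs : Convex ℝ s) (hso : IsOpen s)
    (ht : Convex ℝ t) (hst : Disjoint s t) {f : E} (hfs : f ∈ closure s) (hft : f ∈ t) :
    ∃ L : StrongDual ℝ E, (∀ a ∈ s, L a < L f) ∧ ∀ b ∈ t, L f ≤ L b := by
  obtain ⟨L, u, hLs, hLt⟩ := geometric_hahn_banach_open hs hso ht hst
  have hfu : L f ≤ u :=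
    closure_minimal (fun a ha => (hLs a ha).le) (isClosed_le L.continuous continuous_const) hfs
  exact ⟨L, fun a ha => (hLs a ha).trans_le (hLt f hft), fun b hb => hfu.trans (hLt b hb)⟩

variable [CompleteSpace E]

lemma exists_forall_apply_sub_le (F : StrongDual ℝ E) {ε : ℝ} (hε : 0 < ε) :
    ∃ f : E, ‖f‖ ≤ 1 ∧ ∀ x, ‖x‖ ≤ 1 → F x - F f ≤ ε * ‖x - f‖ := by
  let B := Metric.closedBall (0 : E) 1
  have : CompleteSpace B := Metric.isClosed_closedBall.completeSpace_coe
  have : Nonempty B := ⟨0, by simp [B]⟩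
  have hbdd : BddBelow (Set.range fun x : B => -F x) :=
    ⟨-‖F‖, Set.forall_mem_range.2 fun x => neg_le_neg <|
      (le_abs_self _).trans (F.unit_le_opNorm x (mem_closedBall_zero_iff.1 x.2))⟩
  have hcont : Continuous fun x : B => -F x := by fun_prop
  obtain ⟨f, hf⟩ := exists_forall_lt_add_mul_dist hcont.lowerSemicontinuous hbdd hε
  refine ⟨f, mem_closedBall_zero_iff.1 f.2, fun x hx => ?_⟩
  obtain rfl | hxf := eq_or_ne x f
  · simp
  · have := hf ⟨x, mem_closedBall_zero_iff.2 hx⟩ fun h => hxf congr(($h : E))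
    rw [Subtype.dist_eq, dist_comm, dist_eq_norm] at this
    linarith

lemma exists_attainsNorm_forall_pos (F : StrongDual ℝ E) {ε : ℝ} (hε : 0 < ε) :
    ∃ L : StrongDual ℝ E, AttainsNorm L ∧ ∀ v, ε * ‖v‖ < F v → 0 < L v := by
  by_cases hcone : ∀ v, F v ≤ ε * ‖v‖
  · exact ⟨0, ⟨0, by simp⟩, fun v hv => absurd hv (hcone v).not_gt⟩
  push Not at hcone
  obtain ⟨v₀, hv₀⟩ := hcone
  obtain ⟨f, hf, hmax⟩ := exists_forall_apply_sub_le F hε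
  let K : Set E := {x | x ∈ Set.univ ∧ ε • dist x f - F x < -F f}
  have hKconv : Convex ℝ K :=
    (((convexOn_univ_dist f).smul hε.le).sub (F.toLinearMap.concaveOn convex_univ)).convex_lt _
  have hKopen : IsOpen K := by
    simpa [K] using isOpen_lt (by fun_prop : Continuous fun x => ε * dist x f - F x)
      continuous_const
  have hdisj : Disjoint K (Metric.closedBall 0 1) := Set.disjoint_left.2 fun x hx hxB => by
    have hle := hmax x (mem_closedBall_zero_iff.1 hxB)
    have hlt := hx.2
    rw [dist_eq_norm, smul_eq_mul] at hlt
    linarith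
  have hray {v : E} (hv : ε * ‖v‖ < F v) {t : ℝ} (ht : 0 < t) : f + t • v ∈ K := by
    have := mul_lt_mul_of_pos_left hv ht
    refine ⟨trivial, ?_⟩
    simp only [dist_eq_norm, add_sub_cancel_left, norm_smul, Real.norm_eq_abs, abs_of_pos ht,
      smul_eq_mul, map_add, map_smul]
    linarith
  have hfK : f ∈ closure K := by
    have hlim : Tendsto (fun t : ℝ => f + t • v₀) (𝓝[>] 0) (𝓝 f) :=
      tendsto_nhdsWithin_of_tendsto_nhds (Continuous.tendsto' (by fun_prop) _ _ (by simp))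
    exact mem_closure_of_tendsto hlim (eventually_mem_nhdsWithin.mono fun t ht => hray hv₀ ht)
  obtain ⟨L, hLK, hLB⟩ := exists_forall_lt_forall_le_of_mem_closure hKconv hKopen
    (convex_closedBall 0 1) hdisj hfK (mem_closedBall_zero_iff.2 hf)
  refine ⟨-L, attainsNorm_of_isMaxOn hf fun x hx => neg_le_neg (hLB x hx), fun v hv => neg_pos.2 ?_⟩
  simpa using hLK _ (hray hv one_pos)

/-- The **Bishop–Phelps theorem** for the unit ball. -/
theorem dense_setOf_attainsNorm : Dense {G : StrongDual ℝ E | AttainsNorm G} := by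
  refine Metric.dense_iff.2 fun F r hr => ?_
  obtain ⟨L, hL, hpos⟩ := exists_attainsNorm_forall_pos F (half_pos hr)
  obtain ⟨c, hc, hFc⟩ := exists_norm_sub_smul_le (half_pos hr).le hpos
  refine ⟨c • L, ?_, hL.smul hc⟩
  rw [mem_ball_iff_norm']
  linarith

end BishopPhelps

section Helly

lemma exists_forall_dual_apply_eq {K V ι : Type*} [Field K] [AddCommGroup V] [Module K V]
    [Fintype ι] (g : ι → Module.Dual K V) (c : ι → K)
    (h : ∀ a : ι → K, ∑ i, a i • g i = 0 → ∑ i, a i * c i = 0) : ∃ x, ∀ i, g i x = c i := by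
  classical
  suffices c ∈ LinearMap.range (LinearMap.pi g) from this.imp fun x hx i => congr_fun hx i
  by_contra hc
  obtain ⟨ψ, hψc, hψ⟩ := Submodule.exists_le_ker_of_notMem hc
  have hψ_apply (w : ι → K) : ψ w = ∑ i, ψ (fun j => if i = j then 1 else 0) * w i := by
    simpa [mul_comm] using ψ.pi_apply_eq_sum_univ w
  refine hψc ?_
  rw [hψ_apply]
  refine h _ (LinearMap.ext fun x => ?_)
  simpa [hψ_apply (LinearMap.pi g x)] using hψ ⟨x, rfl⟩

variable {𝕜 E : Type*} [RCLike 𝕜] [NormedAddCommGroup E] [NormedSpace 𝕜 E]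

/-- **Helly's theorem**. The quotient norm of a solution modulo the common kernel of the `g i` is
attained by a functional in their span, where `F` is evaluation at that solution. -/
theorem exists_norm_lt_forall_apply_eq {ι : Type*} [Finite ι] (g : ι → StrongDual 𝕜 E)
    (F : StrongDual 𝕜 (StrongDual 𝕜 E)) {r : ℝ} (hF : ‖F‖ < r) :
    ∃ x, ‖x‖ < r ∧ ∀ i, g i x = F (g i) := by
  have := Fintype.ofFinite ι
  obtain ⟨x₀, hx₀⟩ : ∃ x₀, ∀ i, g i x₀ = F (g i) :=
    exists_forall_dual_apply_eq (fun i => (g i).toLinearMap) (fun i => F (g i)) fun a ha => by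
      have ha' : ∑ i, a i • g i = 0 := ContinuousLinearMap.coe_injective (by simpa using ha)
      simpa using congr(F $ha')
  let p := ⨅ i, LinearMap.ker (g i).toLinearMap
  obtain ⟨h, hnorm, hh⟩ := exists_dual_vector'' 𝕜 (p.mkQ x₀)
  have hspan : (h.comp p.mkQL).toLinearMap ∈
      Submodule.span 𝕜 (Set.range fun i => (g i).toLinearMap) :=
    mem_span_of_iInf_ker_le_ker fun x hx =>
      (congrArg h ((Submodule.Quotient.mk_eq_zero p).2 hx)).trans (map_zero h)
  obtain ⟨a, ha⟩ := (Submodule.mem_span_range_iff_exists_fun 𝕜).1 hspan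
  have ha' : ∑ i, a i • g i = h.comp p.mkQL := ContinuousLinearMap.coe_injective (by simpa using ha)
  have hF_eq : F (h.comp p.mkQL) = ‖p.mkQ x₀‖ := by
    calc F (h.comp p.mkQL) = (h.comp p.mkQL) x₀ := by simp [← ha', hx₀]
      _ = ‖p.mkQ x₀‖ := hh
  have hcomp : ‖h.comp p.mkQL‖ ≤ 1 := by
    refine ContinuousLinearMap.opNorm_le_bound _ zero_le_one fun x => ?_
    exact (h.le_of_opNorm_le hnorm _).trans
      (mul_le_mul_of_nonneg_left (Submodule.Quotient.norm_mk_le p x) zero_le_one)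
  have hx₀_norm : ‖p.mkQ x₀‖ < r :=
    calc ‖p.mkQ x₀‖ = ‖F (h.comp p.mkQL)‖ := by simp [hF_eq]
      _ ≤ ‖F‖ := F.unit_le_opNorm _ hcomp
      _ < r := hF
  obtain ⟨x, hx, hxr⟩ := Submodule.Quotient.norm_mk_lt (p.mkQ x₀) (sub_pos.2 hx₀_norm)
  have hker : x - x₀ ∈ p := (Submodule.Quotient.eq p).1 hx
  refine ⟨x, by linarith, fun i => ?_⟩
  rw [← hx₀, ← sub_eq_zero, ← map_sub]
  exact (Submodule.mem_iInf _).1 hker i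

lemma exists_dual_eq_one_of_notMem_closure {p : Submodule 𝕜 E} {x : E}
    (hx : x ∉ closure (p : Set E)) : ∃ f : StrongDual 𝕜 E, (∀ y ∈ p, f y = 0) ∧ f x = 1 := by
  let q := p.topologicalClosure
  have : IsClosed (q : Set E) := p.isClosed_topologicalClosure
  have hxq : q.mkQ x ≠ 0 := fun h => hx ((Submodule.Quotient.mk_eq_zero q).1 h)
  obtain ⟨h, hh⟩ := SeparatingDual.exists_eq_one (R := 𝕜) hxq
  refine ⟨h.comp q.mkQL, fun y hy => ?_, hh⟩
  have hyq : q.mkQ y = 0 := (Submodule.Quotient.mk_eq_zero q).2 (p.le_topologicalClosure hy)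
  exact (congrArg h hyq).trans (map_zero h)

end Helly

section Interlacing

lemma exists_seq_of_forall_fin {α : Type*} {Q : ∀ n, (Fin n → α) → α → Prop}
    (h : ∀ n a, ∃ b, Q n a b) : ∃ a : ℕ → α, ∀ n, Q n (fun i => a i) (a n) := by
  choose next hnext using h
  let a : ℕ → α := fun n => Nat.strongRecOn n fun n ih => next n fun i => ih i i.2
  have ha (n : ℕ) : a n = next n fun i => a i := Nat.strongRecOn_eq _ _
  exact ⟨a, fun n => (ha n).symm ▸ hnext n _⟩

variable {E : Type*} [NormedAddCommGroup E] [NormedSpace ℝ E] {f : StrongDual ℝ E} {t c : ℕ → ℝ}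
  {w : ℕ → E} {g : ℕ → StrongDual ℝ E}

/-- James's interlacing of vectors `w n`, of norm close to `1`, with a bounded sequence of
functionals `g i`: the matrix with entry `g i (w n)` in row `n` and column `i` is lower triangular,
and row `n` is constantly `f (w n) = 1 + t n` up to the diagonal. -/
structure IsInterlaced (f : StrongDual ℝ E) (t : ℕ → ℝ) (w : ℕ → E) (g : ℕ → StrongDual ℝ E) :
    Prop where
  norm_lt (n : ℕ) : ‖w n‖ < 1 + 2 * t n
  apply_eq (n : ℕ) : f (w n) = 1 + t n
  apply_eq_of_le {i n : ℕ} (h : i ≤ n) : g i (w n) = 1 + t n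
  apply_eq_zero {i n : ℕ} (h : n < i) : g i (w n) = 0
  exists_norm_le : ∃ K, ∀ i, ‖g i‖ ≤ K

set_option maxSynthPendingDepth 3 in
lemma exists_apply_eq_one_forall_apply_eq_zero {ι : Type*} [Finite ι]
    {F : StrongDual ℝ (StrongDual ℝ E)} {Φ : StrongDual ℝ (StrongDual ℝ (StrongDual ℝ E))}
    (hΦ : ∀ x, Φ (NormedSpace.inclusionInDoubleDual ℝ E x) = 0) (hΦF : Φ F = 1) (w : ι → E) :
    ∃ g : StrongDual ℝ E, ‖g‖ < ‖Φ‖ + 1 ∧ F g = 1 ∧ ∀ i, g (w i) = 0 := by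
  obtain ⟨g, hg, hgw⟩ := exists_norm_lt_forall_apply_eq
    (fun o : Option ι => o.elim F fun i => NormedSpace.inclusionInDoubleDual ℝ E (w i)) Φ
    (lt_add_one _)
  exact ⟨g, hg, (hgw none).trans hΦF, fun i => (hgw (some i)).trans (hΦ _)⟩

set_option maxSynthPendingDepth 3 in
lemma exists_norm_lt_forall_apply_eq_one_add {ι : Type*} [Finite ι]
    {F : StrongDual ℝ (StrongDual ℝ E)} (hF : ‖F‖ ≤ 1) {g : ι → StrongDual ℝ E}
    (hg : ∀ i, F (g i) = 1) {s : ℝ} (hs : 0 < s) :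
    ∃ w : E, ‖w‖ < 1 + 2 * s ∧ ∀ i, g i w = 1 + s := by
  have hnorm : ‖(1 + s) • F‖ < 1 + 2 * s :=
    calc ‖(1 + s) • F‖ = (1 + s) * ‖F‖ := by rw [norm_smul, Real.norm_of_nonneg (by positivity)]
      _ ≤ 1 + s := mul_le_of_le_one_right (by positivity) hF
      _ < 1 + 2 * s := by linarith
  simpa [hg] using exists_norm_lt_forall_apply_eq g ((1 + s) • F) hnorm

set_option maxSynthPendingDepth 3 in
lemma exists_isInterlaced {F : StrongDual ℝ (StrongDual ℝ E)}
    (hF : F ∉ closure (Set.range (NormedSpace.inclusionInDoubleDual ℝ E))) (hFnorm : ‖F‖ ≤ 1)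
    (hFf : F f = 1) (ht : ∀ n, 0 < t n) : ∃ w g, IsInterlaced f t w g := by
  obtain ⟨Φ, hΦ, hΦF⟩ := exists_dual_eq_one_of_notMem_closure
    (p := (NormedSpace.inclusionInDoubleDual ℝ E).range) hF
  obtain ⟨a, ha⟩ := exists_seq_of_forall_fin (α := E × {g : StrongDual ℝ E // F g = 1})
    (Q := fun n a b => (‖b.2.1‖ < ‖Φ‖ + 1 ∧ ∀ i, b.2.1 (a i).1 = 0) ∧ ‖b.1‖ < 1 + 2 * t n ∧
      f b.1 = 1 + t n ∧ b.2.1 b.1 = 1 + t n ∧ ∀ i, (a i).2.1 b.1 = 1 + t n) fun n a => by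
    obtain ⟨g, hgnorm, hFg, hgw⟩ := exists_apply_eq_one_forall_apply_eq_zero
      (fun x => hΦ _ ⟨x, rfl⟩) hΦF fun i => (a i).1
    obtain ⟨w, hwnorm, hw⟩ := exists_norm_lt_forall_apply_eq_one_add hFnorm
      (g := fun o : Option (Option (Fin n)) => o.elim f fun o => o.elim g fun i => (a i).2.1)
      (by rintro (_ | _ | i); exacts [hFf, hFg, (a i).2.2]) (ht n)
    exact ⟨(w, ⟨g, hFg⟩), ⟨hgnorm, hgw⟩, hwnorm, hw none, hw (some none),
      fun i => hw (some (some i))⟩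
  refine ⟨fun n => (a n).1, fun n => (a n).2.1, ?_⟩
  exact {
    norm_lt n := (ha n).2.1
    apply_eq n := (ha n).2.2.1
    apply_eq_of_le {i n} h := by
      obtain rfl | h := h.eq_or_lt
      exacts [(ha i).2.2.2.1, (ha n).2.2.2.2 ⟨i, h⟩]
    apply_eq_zero {i n} h := (ha i).1.2 ⟨n, h⟩
    exists_norm_le := ⟨_, fun i => (ha i).1.1.le⟩ }

/-- The set whose norm has no minimum: inside the space of all `y` with `g i y → 0`, it is cut out
by the half-space `1 ≤ f y` and by half-spaces `1 ≤ g i y` that are slanted by `c i`, so that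
they only exclude points near the hyperplane `f y = 1`. -/
def slantedSet (f : StrongDual ℝ E) (g : ℕ → StrongDual ℝ E) (c : ℕ → ℝ) : Set E :=
  {y | Tendsto (fun i => g i y) atTop (𝓝 0)} ∩ {y | 1 ≤ f y} ∩
    {y | ∀ i, 1 ≤ g i y + c i * (f y - 1)}

lemma isClosed_slantedSet (hg : ∃ K, ∀ i, ‖g i‖ ≤ K) : IsClosed (slantedSet f g c) := by
  have hequi : Equicontinuous fun i x => g i x :=
    ((NormedSpace.equicontinuous_TFAE g).out 5 1 :).1 hg
  refine ((hequi.isClosed_setOfPred_tendsto continuous_const).inter ?_).inter ?_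
  · exact isClosed_le continuous_const f.continuous
  · simp only [Set.ofPred_forall]
    exact isClosed_iInter fun i => isClosed_le continuous_const (by fun_prop)

lemma convex_slantedSet : Convex ℝ (slantedSet f g c) := by
  refine (Convex.inter ?_ (convex_halfSpace_ge f.isLinear 1)).inter ?_
  · intro x hx y hy a b _ _ _
    simpa using (hx.const_mul a).add (hy.const_mul b)
  · simp only [Set.ofPred_forall]
    refine convex_iInter fun i => ?_
    convert convex_halfSpace_ge (g i + c i • f).isLinear (1 + c i) using 3 with y
    change 1 ≤ g i y + c i * (f y - 1) ↔ 1 + c i ≤ g i y + c i * f y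
    constructor <;> intro h <;> linarith

lemma one_lt_norm_of_mem_slantedSet (hf : ‖f‖ ≤ 1) {y : E} (hy : y ∈ slantedSet f g c) :
    1 < ‖y‖ := by
  obtain ⟨⟨hlim, hfy⟩, hslant⟩ := hy
  have hfy_norm : f y ≤ ‖y‖ := (le_abs_self _).trans (by simpa using f.le_of_opNorm_le hf y)
  refine (hfy.trans hfy_norm).lt_of_ne fun h => (zero_lt_one' ℝ).not_ge ?_
  refine ge_of_tendsto' hlim fun i => ?_
  simpa [le_antisymm (hfy_norm.trans h.ge) hfy] using hslant i

lemma IsInterlaced.mem_slantedSet (h : IsInterlaced f t w g) (ht : ∀ n, 0 < t n)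
    (hanti : Antitone t) (n : ℕ) : w n ∈ slantedSet f g fun i => (t i)⁻¹ := by
  refine ⟨⟨?_, ?_⟩, fun i => ?_⟩
  · exact tendsto_const_nhds.congr' <|
      (eventually_gt_atTop n).mono fun i hi => (h.apply_eq_zero hi).symm
  · change 1 ≤ f (w n)
    linarith [h.apply_eq n, ht n]
  · rw [h.apply_eq, add_sub_cancel_left]
    rcases le_or_gt i n with hi | hi
    · have := mul_pos (inv_pos.2 (ht i)) (ht n)
      linarith [h.apply_eq_of_le hi, ht n]
    · rw [h.apply_eq_zero hi, zero_add, inv_mul_eq_div, one_le_div (ht i)]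
      exact hanti hi.le

lemma IsInterlaced.not_isMinOn_norm (h : IsInterlaced f t w g) (hf : ‖f‖ ≤ 1) (ht : ∀ n, 0 < t n)
    (hanti : Antitone t) (hlim : Tendsto t atTop (𝓝 0)) {y : E}
    (hy : y ∈ slantedSet f g fun i => (t i)⁻¹) :
    ¬ IsMinOn (‖·‖) (slantedSet f g fun i => (t i)⁻¹) y := fun hmin => by
  refine (one_lt_norm_of_mem_slantedSet hf hy).not_ge (ge_of_tendsto' (x := atTop)
    (f := fun n => 1 + 2 * t n) (by simpa using (hlim.const_mul 2).const_add 1) fun n => ?_)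
  exact (hmin (h.mem_slantedSet ht hanti n)).trans (h.norm_lt n).le

lemma exists_isClosed_convex_forall_not_isMinOn_norm {F : StrongDual ℝ (StrongDual ℝ E)}
    (hF : F ∉ closure (Set.range (NormedSpace.inclusionInDoubleDual ℝ E))) (hFnorm : ‖F‖ ≤ 1)
    (hf : ‖f‖ ≤ 1) (hFf : F f = 1) :
    ∃ C : Set E, C.Nonempty ∧ IsClosed C ∧ Convex ℝ C ∧ ∀ y ∈ C, ¬ IsMinOn (‖·‖) C y := by
  let t : ℕ → ℝ := fun n => 1 / (n + 1)
  have ht (n : ℕ) : 0 < t n := Nat.one_div_pos_of_nat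
  have hanti : Antitone t := fun _ _ h => Nat.one_div_le_one_div h
  obtain ⟨w, g, h⟩ := exists_isInterlaced hF hFnorm hFf ht
  exact ⟨slantedSet f g fun i => (t i)⁻¹, ⟨w 0, h.mem_slantedSet ht hanti 0⟩,
    isClosed_slantedSet h.exists_norm_le, convex_slantedSet,
    fun y hy => h.not_isMinOn_norm hf ht hanti tendsto_one_div_add_atTop_nhds_zero_nat hy⟩

end Interlacing

section MinimalNorm

variable {E : Type*} [NormedAddCommGroup E] [NormedSpace ℝ E]

set_option maxSynthPendingDepth 3 in
lemma exists_notMem_closure_range_apply_eq_one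
    (hE : ¬ DenseRange (NormedSpace.inclusionInDoubleDual ℝ E)) :
    ∃ (F : StrongDual ℝ (StrongDual ℝ E)) (f : StrongDual ℝ E),
      F ∉ closure (Set.range (NormedSpace.inclusionInDoubleDual ℝ E)) ∧ ‖F‖ ≤ 1 ∧ ‖f‖ ≤ 1 ∧
        F f = 1 := by
  let p := (NormedSpace.inclusionInDoubleDual ℝ E).range.topologicalClosure
  obtain ⟨G, ⟨f, hf, hGf⟩, hGp⟩ := dense_setOf_attainsNorm.exists_mem_open
    (U := (p : Set (StrongDual ℝ (StrongDual ℝ E)))ᶜ)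
    (Submodule.isClosed_topologicalClosure _).isOpen_compl
    (Set.nonempty_compl.2 fun h => hE (dense_iff_closure_eq.2 h))
  have hG : ‖G‖ ≠ 0 := norm_ne_zero_iff.2 fun h => hGp (h ▸ p.zero_mem)
  refine ⟨‖G‖⁻¹ • G, f, fun h => hGp ((p.smul_mem_iff (inv_ne_zero hG)).1 h), ?_, hf, ?_⟩
  · rw [norm_smul, norm_inv, norm_norm, inv_mul_cancel₀ hG]
  · rw [smul_apply, hGf, smul_eq_mul, inv_mul_cancel₀ hG]

theorem denseRange_inclusionInDoubleDual_of_forall_exists_isMinOn_norm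
    (h : ∀ C : Set E, C.Nonempty → IsClosed C → Convex ℝ C → ∃ y ∈ C, IsMinOn (‖·‖) C y) :
    DenseRange (NormedSpace.inclusionInDoubleDual ℝ E) := by
  by_contra hE
  obtain ⟨F, f, hF, hFnorm, hf, hFf⟩ := exists_notMem_closure_range_apply_eq_one hE
  obtain ⟨C, hne, hc, hconv, hmin⟩ :=
    exists_isClosed_convex_forall_not_isMinOn_norm hF hFnorm hf hFf
  obtain ⟨y, hy, hymin⟩ := h C hne hc hconv
  exact hmin y hy hymin

set_option maxSynthPendingDepth 3 in
lemma isClosed_range_inclusionInDoubleDual [CompleteSpace E] :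
    IsClosed (Set.range (NormedSpace.inclusionInDoubleDual ℝ E)) :=
  (NormedSpace.inclusionInDoubleDualLi (E := E) ℝ).isometry.isClosedEmbedding.isClosed_range

end MinimalNorm

/-- A Banach space is reflexive iff every nonempty closed convex subset is simultaneously
proximinal. -/
theorem reflexive_iff_closed_convex_simProximinal [CompleteSpace X] :
    Function.Surjective (NormedSpace.inclusionInDoubleDual ℝ X) ↔
      ∀ C : Set X, C.Nonempty → IsClosed C → Convex ℝ C → SimProximinal C := by
  refine ⟨fun hX _ hne hc hconv =>
      simProximinal_of_surjective_inclusionInDoubleDual hX hne hc hconv,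
    fun h => ?_⟩
  have hdense : DenseRange (NormedSpace.inclusionInDoubleDual ℝ X) :=
    denseRange_inclusionInDoubleDual_of_forall_exists_isMinOn_norm fun C hne hc hconv =>
      (h C hne hc hconv).exists_isMinOn_norm
  rw [← Set.range_eq_univ, ← isClosed_range_inclusionInDoubleDual.closure_eq]
  exact hdense.closure_range
end
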